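/- Let N ≥ 2 and m ≥ 0 be integers, let q > 1, and let φ = N^m · χ_{[0, N^{−m})} on [0,1). Then ∫_{[0,1)} (M_N φ)^q dμ = 1 + ((N^q − 1)/(N^q − N)) · (N^{m(q−1)} − 1). -/

import Mathlib

open MeasureTheory Set Filter

/-- The `N`-adic interval `[k/N^m, (k+1)/N^m)` at level `m`. -/
def adicItv (N m k : ℕ) : Set ℝ :=
  Set.Ico ((k : ℝ) / (N : ℝ) ^ m) (((k : ℝ) + 1) / (N : ℝ) ^ m)

/-- The average `(1/μ(I)) ∫_I |φ| dμ` of `φ` over the `N`-adic interval at level `m`, index `k`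
(its measure is `N^{-m}`). -/
noncomputable def adicAvg (N : ℕ) (φ : ℝ → ℝ) (m k : ℕ) : ℝ :=
  (N : ℝ) ^ m * ∫ y in adicItv N m k, |φ y|

/-- The `N`-adic maximal operator on `[0,1)`:
`M_N φ(x) = sup { (1/μ(I)) ∫_I |φ| dμ : x ∈ I, I an N-adic interval }`. -/
noncomputable def adicMax (N : ℕ) (φ : ℝ → ℝ) (x : ℝ) : ℝ :=
  sSup {r : ℝ | ∃ m k : ℕ, k < N ^ m ∧ x ∈ adicItv N m k ∧ r = adicAvg N φ m k}

/-
For `0 ≤ x < 1` the largest average of `φ` comes from an interval based at `0`. On the shell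
`[N^{-(j+1)}, N^{-j})` with `j < m`, an interval containing `x` of level at most `j` has average at
most `N^j ∫ φ = N^j`, attained by `[0, N^{-j})`, while an interval of higher level cannot cross the
`N`-adic point `N^{-(j+1)}` and so misses the support of `φ`. Hence `M_N φ = N^j` on that shell and
`M_N φ = N^m` on `[0, N^{-m})`. Integrating shell by shell gives a geometric sum of ratio
`N^(q-1)`.
-/

section AdicIntervals

variable {N : ℕ} {φ : ℝ → ℝ} {C x : ℝ} {m i k l a : ℕ}

lemma adicItv_zero_right (N m : ℕ) : adicItv N m 0 = Ico 0 (1 / (N : ℝ) ^ m) := by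
  simp only [adicItv, Nat.cast_zero, zero_div, zero_add]

lemma volume_real_adicItv (N m k : ℕ) : volume.real (adicItv N m k) = 1 / (N : ℝ) ^ m := by
  have h_le : (k : ℝ) / (N : ℝ) ^ m ≤ (k + 1) / (N : ℝ) ^ m := by gcongr; linarith
  rw [adicItv, Real.volume_real_Ico_of_le h_le]
  ring

lemma adicItv_subset_Ici (hN : 0 < N) (hli : l ≤ i) (hx : x ∈ adicItv N i k)
    (hax : (a : ℝ) / (N : ℝ) ^ l ≤ x) : adicItv N i k ⊆ Ici ((a : ℝ) / (N : ℝ) ^ l) := by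
  have : (0 : ℝ) < N := by exact_mod_cast hN
  have h_rescale : (a : ℝ) / (N : ℝ) ^ l = (a * N ^ (i - l) : ℕ) / (N : ℝ) ^ i := by
    rw [div_eq_div_iff (by positivity) (by positivity)]
    push_cast
    rw [mul_assoc, ← pow_add, Nat.sub_add_cancel hli]
  have h_lt : ((a * N ^ (i - l) : ℕ) : ℝ) < k + 1 := by
    have h := (h_rescale ▸ hax).trans_lt hx.2
    rwa [div_lt_div_iff_of_pos_right (by positivity)] at h
  have h_le : a * N ^ (i - l) ≤ k := Nat.lt_succ_iff.mp (by exact_mod_cast h_lt)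
  intro y hy
  rw [mem_Ici, h_rescale]
  refine le_trans ?_ hy.1
  gcongr

lemma adicAvg_le_of_abs_le (hN : 0 < N) (hφ : ∀ y, |φ y| ≤ C) (i k : ℕ) :
    adicAvg N φ i k ≤ C := by
  have : (0 : ℝ) < N := by exact_mod_cast hN
  have h_int : ∫ y in adicItv N i k, |φ y| ≤ C * (1 / (N : ℝ) ^ i) := by
    rw [← volume_real_adicItv N i k]
    exact (le_abs_self _).trans <| norm_setIntegral_le_of_norm_le_const
      (f := fun y => |φ y|) measure_Ico_lt_top fun y _ => (abs_abs (φ y)).trans_le (hφ y)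
  calc adicAvg N φ i k ≤ (N : ℝ) ^ i * (C * (1 / (N : ℝ) ^ i)) := by unfold adicAvg; gcongr
    _ = C := by field_simp

lemma adicAvg_le_pow_mul_integral (hφ : Integrable φ) (i k : ℕ) :
    adicAvg N φ i k ≤ (N : ℝ) ^ i * ∫ y, |φ y| := by
  unfold adicAvg
  gcongr ?_ * ?_
  exact setIntegral_le_integral hφ.abs (.of_forall fun y => abs_nonneg (φ y))

lemma adicAvg_eq_pow_mul_integral (h : Function.support φ ⊆ adicItv N i k) :
    adicAvg N φ i k = (N : ℝ) ^ i * ∫ y, |φ y| := by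
  rw [adicAvg, setIntegral_eq_integral_of_forall_compl_eq_zero fun y hy => ?_]
  rw [Function.notMem_support.mp fun hy' => hy (h hy'), abs_zero]

lemma adicAvg_eq_zero_of_disjoint (h : Disjoint (Function.support φ) (adicItv N i k)) :
    adicAvg N φ i k = 0 := by
  rw [adicAvg, setIntegral_eq_zero_of_forall_eq_zero fun y hy => ?_, mul_zero]
  rw [Function.notMem_support.mp (disjoint_right.mp h hy), abs_zero]

lemma adicMax_eq_adicAvg (hk : k < N ^ m) (hx : x ∈ adicItv N m k)
    (h : ∀ i l, x ∈ adicItv N i l → adicAvg N φ i l ≤ adicAvg N φ m k) :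
    adicMax N φ x = adicAvg N φ m k := by
  refine IsGreatest.csSup_eq ⟨⟨m, k, hk, hx, rfl⟩, ?_⟩
  rintro r ⟨i, l, -, hxl, rfl⟩
  exact h i l hxl

lemma adicMax_eq_pow_mul_integral (hN : 0 < N) (hφ : Integrable φ) {j : ℕ}
    (hsupp : Function.support φ ⊆ Ico 0 (1 / (N : ℝ) ^ (j + 1)))
    (hx : x ∈ Ico (1 / (N : ℝ) ^ (j + 1)) (1 / (N : ℝ) ^ j)) :
    adicMax N φ x = (N : ℝ) ^ j * ∫ y, |φ y| := by
  have hN' : (1 : ℝ) ≤ N := by exact_mod_cast hN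
  have hx0 : 0 ≤ x := le_trans (by positivity) hx.1
  have h_int : 0 ≤ ∫ y, |φ y| := integral_nonneg fun y => abs_nonneg (φ y)
  have h_avg : adicAvg N φ j 0 = (N : ℝ) ^ j * ∫ y, |φ y| := by
    refine adicAvg_eq_pow_mul_integral (hsupp.trans ?_)
    rw [adicItv_zero_right]
    exact Ico_subset_Ico_right (hx.1.trans hx.2.le)
  rw [← h_avg]
  refine adicMax_eq_adicAvg (by positivity) (by rw [adicItv_zero_right]; exact ⟨hx0, hx.2⟩)
    fun i k hxk => ?_
  rw [h_avg]
  rcases le_or_gt i j with hij | hji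
  · calc adicAvg N φ i k ≤ (N : ℝ) ^ i * ∫ y, |φ y| := adicAvg_le_pow_mul_integral hφ i k
      _ ≤ (N : ℝ) ^ j * ∫ y, |φ y| := by gcongr
  · have h_right : adicItv N i k ⊆ Ici (1 / (N : ℝ) ^ (j + 1)) := by
      simpa only [Nat.cast_one] using
        adicItv_subset_Ici (a := 1) hN hji hxk (by simpa only [Nat.cast_one] using hx.1)
    have h_disj : Disjoint (Function.support φ) (adicItv N i k) :=
      disjoint_left.mpr fun y hy hyk => (hsupp hy).2.not_ge (h_right hyk)
    rw [adicAvg_eq_zero_of_disjoint h_disj]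
    exact mul_nonneg (by positivity) h_int

end AdicIntervals

section StepFunctions

variable {E : Type*} [NormedAddCommGroup E] {f : ℝ → E}

lemma integrableOn_Ico_of_eqOn_const {a b : ℝ} {c : E} (hf : EqOn f (fun _ => c) (Ico a b)) :
    IntegrableOn f (Ico a b) :=
  (integrableOn_congr_fun hf measurableSet_Ico).mpr (integrableOn_const measure_Ico_lt_top.ne)

lemma integrableOn_Ico_of_antitone_steps {a : ℕ → ℝ} (ha : Antitone a) {c : ℕ → E} {m : ℕ}
    (hf : ∀ j < m, EqOn f (fun _ => c j) (Ico (a (j + 1)) (a j))) :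
    IntegrableOn f (Ico (a m) (a 0)) := by
  induction m with
  | zero => simp only [Ico_self, integrableOn_empty]
  | succ m ih =>
    rw [← Ico_union_Ico_eq_Ico (ha m.le_succ) (ha m.zero_le)]
    exact (integrableOn_Ico_of_eqOn_const (hf m m.lt_succ_self)).union
      (ih fun j hj => hf j (hj.trans m.lt_succ_self))

variable [NormedSpace ℝ E] [CompleteSpace E]

lemma setIntegral_Ico_of_eqOn_const {a b : ℝ} (hab : a ≤ b) {c : E}
    (hf : EqOn f (fun _ => c) (Ico a b)) : ∫ x in Ico a b, f x = (b - a) • c := by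
  rw [setIntegral_congr_fun measurableSet_Ico hf, setIntegral_const,
    Real.volume_real_Ico_of_le hab]

lemma setIntegral_Ico_of_antitone_steps {a : ℕ → ℝ} (ha : Antitone a) {c : ℕ → E} {m : ℕ}
    (hf : ∀ j < m, EqOn f (fun _ => c j) (Ico (a (j + 1)) (a j))) :
    ∫ x in Ico (a m) (a 0), f x = ∑ j ∈ Finset.range m, (a j - a (j + 1)) • c j := by
  induction m with
  | zero => simp only [Ico_self, setIntegral_empty, Finset.range_zero, Finset.sum_empty]
  | succ m ih =>
    have hf_last := hf m m.lt_succ_self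
    have hf_init : ∀ j < m, EqOn f (fun _ => c j) (Ico (a (j + 1)) (a j)) :=
      fun j hj => hf j (hj.trans m.lt_succ_self)
    rw [← Ico_union_Ico_eq_Ico (ha m.le_succ) (ha m.zero_le),
      setIntegral_union Ico_disjoint_Ico_same measurableSet_Ico
        (integrableOn_Ico_of_eqOn_const hf_last) (integrableOn_Ico_of_antitone_steps ha hf_init),
      ih hf_init, setIntegral_Ico_of_eqOn_const (ha m.le_succ) hf_last,
      Finset.sum_range_succ, add_comm]

end StepFunctions

/-- The `L¹`-normalized indicator `N^m · χ_{[0, N^{-m})}`, whose maximal function is computed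
here. -/
noncomputable def adicPeak (N m : ℕ) : ℝ → ℝ :=
  (Ico (0 : ℝ) (1 / (N : ℝ) ^ m)).indicator fun _ => (N : ℝ) ^ m

section AdicPeak

variable {N m : ℕ} {x : ℝ}

lemma abs_adicPeak (N m : ℕ) (x : ℝ) : |adicPeak N m x| = adicPeak N m x :=
  abs_of_nonneg (indicator_nonneg (fun _ _ => by positivity) x)

lemma adicPeak_le (N m : ℕ) (x : ℝ) : adicPeak N m x ≤ (N : ℝ) ^ m :=
  indicator_le_self' (fun _ _ => by positivity) x

lemma support_adicPeak_subset (N m : ℕ) :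
    Function.support (adicPeak N m) ⊆ Ico 0 (1 / (N : ℝ) ^ m) :=
  support_indicator_subset

lemma integrable_adicPeak (N m : ℕ) : Integrable (adicPeak N m) :=
  (integrableOn_const measure_Ico_lt_top.ne).integrable_indicator measurableSet_Ico

lemma integral_abs_adicPeak (hN : 0 < N) (m : ℕ) : ∫ x, |adicPeak N m x| = 1 := by
  have : (0 : ℝ) < N := by exact_mod_cast hN
  simp only [abs_adicPeak]
  rw [adicPeak, integral_indicator_const _ measurableSet_Ico,
    Real.volume_real_Ico_of_le (by positivity), sub_zero, smul_eq_mul]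
  field_simp

lemma adicMax_adicPeak_of_mem_core (hN : 0 < N) (hx : x ∈ Ico 0 (1 / (N : ℝ) ^ m)) :
    adicMax N (adicPeak N m) x = (N : ℝ) ^ m := by
  have h_avg : adicAvg N (adicPeak N m) m 0 = (N : ℝ) ^ m := by
    rw [adicAvg_eq_pow_mul_integral
      (by rw [adicItv_zero_right]; exact support_adicPeak_subset N m),
      integral_abs_adicPeak hN, mul_one]
  rw [adicMax_eq_adicAvg (by positivity) (by rwa [adicItv_zero_right]) fun i k _ => ?_, h_avg]
  rw [h_avg]
  exact adicAvg_le_of_abs_le hN (fun y => (abs_adicPeak N m y).trans_le (adicPeak_le N m y)) i k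

lemma adicMax_adicPeak_of_mem_shell (hN : 0 < N) {j : ℕ} (hj : j < m)
    (hx : x ∈ Ico (1 / (N : ℝ) ^ (j + 1)) (1 / (N : ℝ) ^ j)) :
    adicMax N (adicPeak N m) x = (N : ℝ) ^ j := by
  have hN' : (1 : ℝ) ≤ N := by exact_mod_cast hN
  have h_supp : Function.support (adicPeak N m) ⊆ Ico 0 (1 / (N : ℝ) ^ (j + 1)) :=
    (support_adicPeak_subset N m).trans <| Ico_subset_Ico_right <|
      one_div_pow_le_one_div_pow_of_le hN' hj
  rw [adicMax_eq_pow_mul_integral hN (integrable_adicPeak N m) h_supp hx,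
    integral_abs_adicPeak hN, mul_one]

lemma setIntegral_comp_adicMax_adicPeak {E : Type*} [NormedAddCommGroup E] [NormedSpace ℝ E]
    [CompleteSpace E] (hN : 0 < N) (m : ℕ) (Φ : ℝ → E) :
    ∫ x in Ico (0 : ℝ) 1, Φ (adicMax N (adicPeak N m) x) =
      (1 / (N : ℝ) ^ m) • Φ ((N : ℝ) ^ m) +
        ∑ j ∈ Finset.range m,
          (1 / (N : ℝ) ^ j - 1 / (N : ℝ) ^ (j + 1)) • Φ ((N : ℝ) ^ j) := by
  have hN' : (1 : ℝ) ≤ N := by exact_mod_cast hN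
  let a : ℕ → ℝ := fun j => 1 / (N : ℝ) ^ j
  have ha : Antitone a := one_div_pow_anti hN'
  have ham : 0 ≤ a m := by positivity
  have h_core : EqOn (fun x => Φ (adicMax N (adicPeak N m) x)) (fun _ => Φ ((N : ℝ) ^ m))
      (Ico 0 (a m)) := fun x hx => congrArg Φ (adicMax_adicPeak_of_mem_core hN hx)
  have h_shell : ∀ j < m, EqOn (fun x => Φ (adicMax N (adicPeak N m) x))
      (fun _ => Φ ((N : ℝ) ^ j)) (Ico (a (j + 1)) (a j)) :=
    fun j hj x hx => congrArg Φ (adicMax_adicPeak_of_mem_shell hN hj hx)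
  have h_union : Ico (0 : ℝ) 1 = Ico 0 (a m) ∪ Ico (a m) (a 0) := by
    rw [Ico_union_Ico_eq_Ico ham (ha m.zero_le), show a 0 = 1 by simp only [a, pow_zero, div_one]]
  rw [h_union,
    setIntegral_union Ico_disjoint_Ico_same measurableSet_Ico
      (integrableOn_Ico_of_eqOn_const h_core) (integrableOn_Ico_of_antitone_steps ha h_shell),
    setIntegral_Ico_of_eqOn_const ham h_core, setIntegral_Ico_of_antitone_steps ha h_shell,
    sub_zero]

end AdicPeak

lemma one_div_pow_mul_rpow {b : ℝ} (hb : 0 < b) (q : ℝ) (j : ℕ) :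
    1 / b ^ j * (b ^ j) ^ q = (b ^ (q - 1)) ^ j := by
  rw [one_div_mul_eq_div, ← Real.rpow_sub_one (by positivity), Real.rpow_pow_comm hb.le]

lemma setIntegral_adicMax_adicPeak_rpow {N : ℕ} (hN : 0 < N) (m : ℕ) (q : ℝ) :
    ∫ x in Ico (0 : ℝ) 1, adicMax N (adicPeak N m) x ^ q =
      ((N : ℝ) ^ (q - 1)) ^ m +
        (1 - 1 / (N : ℝ)) * ∑ j ∈ Finset.range m, ((N : ℝ) ^ (q - 1)) ^ j := by
  have hN' : (0 : ℝ) < N := by exact_mod_cast hN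
  have h_shell (j : ℕ) : (1 / (N : ℝ) ^ j - 1 / (N : ℝ) ^ (j + 1)) * ((N : ℝ) ^ j) ^ q =
      (1 - 1 / (N : ℝ)) * ((N : ℝ) ^ (q - 1)) ^ j := by
    rw [← one_div_pow_mul_rpow hN' q j, pow_succ]
    field_simp
  rw [setIntegral_comp_adicMax_adicPeak hN m (· ^ q)]
  simp only [smul_eq_mul, h_shell, one_div_pow_mul_rpow hN', Finset.mul_sum]

theorem stmt15_general (N : ℕ) (hN : 2 ≤ N) (m : ℕ) (q : ℝ) (hq : q ≠ 1)
    (φ : ℝ → ℝ) (hφ : φ = indicator (Ico (0 : ℝ) (1 / (N : ℝ) ^ m)) (fun _ => (N : ℝ) ^ m)) :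
    (∫ x in Ico (0 : ℝ) 1, adicMax N φ x ^ q) =
      1 + (((N : ℝ) ^ q - 1) / ((N : ℝ) ^ q - N)) *
        ((N : ℝ) ^ ((m : ℝ) * (q - 1)) - 1) := by
  have hN' : (1 : ℝ) < N := by exact_mod_cast hN
  have hN0 : (0 : ℝ) < N := by positivity
  set A : ℝ := (N : ℝ) ^ (q - 1) with hA
  have hA1 : A ≠ 1 := fun h => sub_ne_zero.mpr hq <|
    (Real.rpow_right_inj hN0 hN'.ne').mp (h.trans (Real.rpow_zero _).symm)
  have hNq : (N : ℝ) ^ q = N * A := by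
    rw [hA, Real.rpow_sub_one hN0.ne', mul_div_cancel₀ _ hN0.ne']
  have hNmq : (N : ℝ) ^ ((m : ℝ) * (q - 1)) = A ^ m := by
    rw [mul_comm, Real.rpow_mul_natCast hN0.le]
  calc ∫ x in Ico (0 : ℝ) 1, adicMax N φ x ^ q
      = A ^ m + (1 - 1 / (N : ℝ)) * ∑ j ∈ Finset.range m, A ^ j := by
        rw [hφ, ← adicPeak, setIntegral_adicMax_adicPeak_rpow (by lia)]
    _ = A ^ m + (1 - 1 / (N : ℝ)) * ((A ^ m - 1) / (A - 1)) := by rw [geom_sum_eq hA1]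
    _ = _ := by
        rw [hNq, hNmq, show (N : ℝ) * A - N = N * (A - 1) by ring]
        have := sub_ne_zero.mpr hA1
        field_simp
        ring

theorem stmt15 (N : ℕ) (hN : 2 ≤ N) (m : ℕ) (q : ℝ) (hq : 1 < q)
    (φ : ℝ → ℝ) (hφ : φ = Set.indicator (Set.Ico (0:ℝ) (1 / (N : ℝ) ^ m))
      (fun _ => (N : ℝ) ^ m)) :
    (∫ x in Set.Ico (0:ℝ) 1, adicMax N φ x ^ q) =
      1 + (((N : ℝ) ^ q - 1) / ((N : ℝ) ^ q - N)) *
        ((N : ℝ) ^ ((m : ℝ) * (q - 1)) - 1) := by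
  exact stmt15_general N hN m q hq.ne' φ hφ
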